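/- arXiv:2109.01899 — 2 statements merged into one kernel-verified Lean document; each statement's English description precedes it below -/
import Mathlib

section
/- Quantitative positivity of the energy–momentum tensor (the bound (QZXN)/(alphanotation) from the proof of Lemma `emtensorpositivity`): let N ∈ ℝ⁴ satisfy η(N,N) = −1 and N₀ > 0, and let X ∈ ℝ⁴ be timelike and future-directed (η(X,X) < 0, X₀ > 0). Set α = −η(X,X) / ( (η(X,X) + η(X,N)²)^{1/2} − η(X,N) ). Then α > 0 and for every Z ∈ ℝ⁴, 2·η(Z,X)·η(Z,N) − η(X,N)·η(Z,Z) ≥ α·( η(Z,Z) + 2·η(Z,N)² ). (Here η(Z,Z) + 2 η(Z,N)² = η(Z,N)² + η(P_N Z, P_N Z) ≥ 0, where P_N Z = Z + η(Z,N) N is the projection of Z orthogonal to N.) -/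
noncomputable section

/-- The Minkowski inner product on `ℝ⁴`: `η(X,Y) = -X₀Y₀ + X₁Y₁ + X₂Y₂ + X₃Y₃`. -/
def eta (X Y : Fin 4 → ℝ) : ℝ :=
  -(X 0 * Y 0) + X 1 * Y 1 + X 2 * Y 2 + X 3 * Y 3

/-!
For a unit timelike vector `N`, the form `h(X, Y) = η(P_N X, P_N Y) = η(X, Y) + η(X, N) η(Y, N)` is
positive semidefinite. With `r = √h(X, X)`, the identity `(r - η(X, N)) (-η(X, N) - r) = -η(X, X)`
turns `α` into `-η(X, N) - r`, and the claimed inequality becomes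
`0 ≤ r (η(Z, N)² + h(Z, Z)) + 2 η(Z, N) h(Z, X)`, which is Cauchy–Schwarz for `h` followed by AM-GM.
Only the Lorentzian signature of `η` matters, and it is enough to see it along one timelike vector:
the Cauchy–Schwarz inequality for that vector's spatial form carries it to all the others.
-/

open LinearMap (BilinForm)

section SpatialForm

variable {R V : Type*} [CommRing R] [AddCommGroup V] [Module R V] {B : BilinForm R V} {N : V}

/-- The projection `P_N X = X + B(X, N) N` along `N`. It is the `B`-orthogonal projection onto the
complement of `N` when `B(N, N) = -1`. -/
def spatialProjection (B : BilinForm R V) (N : V) : V →ₗ[R] V :=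
  LinearMap.id + (B.flip N).smulRight N

/-- The form `(X, Y) ↦ B(P_N X, P_N Y)` induced by `B` on the rest space of `N`, extended by zero
along `N` when `B(N, N) = -1`. -/
def spatialForm (B : BilinForm R V) (N : V) : BilinForm R V :=
  B.comp (spatialProjection B N) (spatialProjection B N)

theorem spatialProjection_apply (X : V) : spatialProjection B N X = X + B X N • N := rfl

theorem spatialProjection_apply_orthogonal (hN : B N N = -1) (X : V) :
    B (spatialProjection B N X) N = 0 := by
  simp [spatialProjection_apply, hN]

theorem spatialForm_apply (hB : B.IsSymm) (hN : B N N = -1) (X Y : V) :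
    spatialForm B N X Y = B X Y + B X N * B Y N := by
  calc spatialForm B N X Y
      = B (spatialProjection B N X) Y + B Y N * B (spatialProjection B N X) N := by
        simp [spatialForm, spatialProjection_apply Y]
    _ = B X Y + B X N * B N Y := by
        rw [spatialProjection_apply_orthogonal hN]
        simp [spatialProjection_apply]
    _ = B X Y + B X N * B Y N := by rw [hB.eq N Y]

end SpatialForm

section Observer

variable {R V : Type*} [CommRing R] [LinearOrder R] [AddCommGroup V] [Module R V]
  {B : BilinForm R V} {N T X Y : V}

/-- An observer of the form `B`: a unit timelike vector `N` on whose orthogonal complement `B` is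
positive semidefinite. The existence of one encodes the Lorentzian signature of `B`, up to
degenerate spatial directions, which are allowed. -/
structure IsObserver (B : BilinForm R V) (N : V) : Prop where
  apply_self : B N N = -1
  nonneg_of_orthogonal : ∀ X, B X N = 0 → 0 ≤ B X X

namespace IsObserver

theorem spatialForm_isPosSemidef (hN : IsObserver B N) (hB : B.IsSymm) :
    (spatialForm B N).IsPosSemidef where
  eq _ _ := hB.eq _ _
  nonneg X := hN.nonneg_of_orthogonal _ (spatialProjection_apply_orthogonal hN.apply_self X)

theorem spatialForm_apply_self_nonneg (hN : IsObserver B N) (hB : B.IsSymm) (X : V) :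
    0 ≤ spatialForm B N X X :=
  (hN.spatialForm_isPosSemidef hB).nonneg X

variable [IsStrictOrderedRing R]

theorem sq_spatialForm_apply_le (hN : IsObserver B N) (hB : B.IsSymm) (X Y : V) :
    spatialForm B N X Y ^ 2 ≤ spatialForm B N X X * spatialForm B N Y Y :=
  have h := hN.spatialForm_isPosSemidef hB
  (spatialForm B N).apply_sq_le_of_symm h.nonneg (BilinForm.isSymm_iff.1 h.isSymm) X Y

theorem spatialForm_apply_self_lt_sq (hT : IsObserver B T) (hB : B.IsSymm) (hX : B X X < 0) :
    spatialForm B T X X < B X T ^ 2 := by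
  rw [spatialForm_apply hB hT.apply_self]
  linarith

theorem nonneg_of_orthogonal_timelike (hT : IsObserver B T) (hB : B.IsSymm) (hN : B N N < 0)
    (hYN : B Y N = 0) : 0 ≤ B Y Y := by
  have h_lt : spatialForm B T N N < B N T ^ 2 := hT.spatialForm_apply_self_lt_sq hB hN
  have hY : 0 ≤ spatialForm B T Y Y := hT.spatialForm_apply_self_nonneg hB Y
  have h_cross : spatialForm B T Y N = B Y T * B N T := by
    rw [spatialForm_apply hB hT.apply_self, hYN, zero_add]
  have h_le : B Y T ^ 2 * B N T ^ 2 ≤ spatialForm B T Y Y * B N T ^ 2 := calc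
    B Y T ^ 2 * B N T ^ 2 = spatialForm B T Y N ^ 2 := by rw [h_cross, mul_pow]
    _ ≤ spatialForm B T Y Y * spatialForm B T N N := hT.sq_spatialForm_apply_le hB Y N
    _ ≤ spatialForm B T Y Y * B N T ^ 2 := mul_le_mul_of_nonneg_left h_lt.le hY
  have hNT : 0 < B N T ^ 2 := (hT.spatialForm_apply_self_nonneg hB N).trans_lt h_lt
  have h_sq : B Y T ^ 2 ≤ spatialForm B T Y Y := le_of_mul_le_mul_right h_le hNT
  rw [spatialForm_apply hB hT.apply_self] at h_sq
  linarith

theorem of_apply_self (hT : IsObserver B T) (hB : B.IsSymm) (hN : B N N = -1) :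
    IsObserver B N where
  apply_self := hN
  nonneg_of_orthogonal _ := hT.nonneg_of_orthogonal_timelike hB (by simp [hN])

theorem apply_neg_of_timelike (hT : IsObserver B T) (hB : B.IsSymm) (hX : B X X < 0)
    (hY : B Y Y < 0) (hXT : B X T < 0) (hYT : B Y T < 0) : B X Y < 0 := by
  have hX_lt : spatialForm B T X X < B X T ^ 2 := hT.spatialForm_apply_self_lt_sq hB hX
  have hY_lt : spatialForm B T Y Y < B Y T ^ 2 := hT.spatialForm_apply_self_lt_sq hB hY
  have h_sq : spatialForm B T X Y ^ 2 < (B X T * B Y T) ^ 2 := calc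
    spatialForm B T X Y ^ 2 ≤ spatialForm B T X X * spatialForm B T Y Y :=
      hT.sq_spatialForm_apply_le hB X Y
    _ < B X T ^ 2 * B Y T ^ 2 :=
      mul_lt_mul'' hX_lt hY_lt (hT.spatialForm_apply_self_nonneg hB X)
        (hT.spatialForm_apply_self_nonneg hB Y)
    _ = (B X T * B Y T) ^ 2 := (mul_pow _ _ _).symm
  have h_lt : spatialForm B T X Y < B X T * B Y T :=
    (abs_lt_of_sq_lt_sq' h_sq (mul_pos_of_neg_of_neg hXT hYT).le).2
  rw [spatialForm_apply hB hT.apply_self] at h_lt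
  linarith

end IsObserver

end Observer

section EnergyMomentum

theorem neg_two_mul_mul_le_mul_sq_add {R : Type*} [CommRing R] [LinearOrder R]
    [IsStrictOrderedRing R] {a g s w : R} (hs : 0 ≤ s) (hw : 0 ≤ w) (hg : g ^ 2 ≤ s ^ 2 * w) :
    -(2 * a * g) ≤ s * (a ^ 2 + w) := by
  have h_sq : (-(a * g)) ^ 2 ≤ s * a ^ 2 * (s * w) := calc
    (-(a * g)) ^ 2 = a ^ 2 * g ^ 2 := by ring
    _ ≤ a ^ 2 * (s ^ 2 * w) := by gcongr
    _ = s * a ^ 2 * (s * w) := by ring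
  linear_combination two_mul_le_add_of_sq_le_mul (by positivity) (by positivity) h_sq

variable {V : Type*} [AddCommGroup V] [Module ℝ V] {B : BilinForm ℝ V} {N T X : V}

/-- The constant `α` bounding the energy–momentum tensor contracted with `X` and `N` from below by
the energy density seen by `N`. -/
def emtensorConstant (B : BilinForm ℝ V) (N X : V) : ℝ :=
  -B X X / (√(B X X + B X N ^ 2) - B X N)

theorem emtensorConstant_pos (hX : B X X < 0) (hXN : B X N < 0) : 0 < emtensorConstant B N X :=
  div_pos (neg_pos.2 hX) (sub_pos.2 (hXN.trans_le (Real.sqrt_nonneg _)))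

theorem emtensorConstant_eq (hN : IsObserver B N) (hB : B.IsSymm) (hXN : B X N < 0) :
    emtensorConstant B N X = -B X N - √(spatialForm B N X X) := by
  have h_form : spatialForm B N X X = B X X + B X N ^ 2 := by
    rw [spatialForm_apply hB hN.apply_self, sq]
  have h_sq := Real.sq_sqrt (hN.spatialForm_apply_self_nonneg hB X)
  have h_denom : 0 < √(spatialForm B N X X) - B X N :=
    sub_pos.2 (hXN.trans_le (Real.sqrt_nonneg _))
  rw [emtensorConstant, ← h_form, div_eq_iff h_denom.ne']
  linear_combination h_sq + h_form

theorem emtensorConstant_mul_le (hN : IsObserver B N) (hB : B.IsSymm) (hXN : B X N < 0) (Z : V) :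
    emtensorConstant B N X * (B Z Z + 2 * B Z N ^ 2) ≤
      2 * B Z X * B Z N - B X N * B Z Z := by
  have h_cs : spatialForm B N Z X ^ 2 ≤ √(spatialForm B N X X) ^ 2 * spatialForm B N Z Z := by
    rw [Real.sq_sqrt (hN.spatialForm_apply_self_nonneg hB X), mul_comm]
    exact hN.sq_spatialForm_apply_le hB Z X
  have h_amgm : -(2 * B Z N * spatialForm B N Z X) ≤
      √(spatialForm B N X X) * (B Z N ^ 2 + spatialForm B N Z Z) :=
    neg_two_mul_mul_le_mul_sq_add (Real.sqrt_nonneg _) (hN.spatialForm_apply_self_nonneg hB Z) h_cs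
  rw [emtensorConstant_eq hN hB hXN]
  rw [spatialForm_apply hB hN.apply_self Z X, spatialForm_apply hB hN.apply_self Z Z] at h_amgm
  linear_combination h_amgm

theorem emtensor_positivity_quantitative_general (hB : B.IsSymm) (hT : IsObserver B T)
    (hN : B N N = -1) (hNT : B N T < 0) (hX : B X X < 0) (hXT : B X T < 0) :
    0 < emtensorConstant B N X ∧
      ∀ Z : V, 2 * B Z X * B Z N - B X N * B Z Z ≥
        emtensorConstant B N X * (B Z Z + 2 * B Z N ^ 2) :=
  have hXN : B X N < 0 := hT.apply_neg_of_timelike hB hX (by simp [hN]) hXT hNT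
  ⟨emtensorConstant_pos hX hXN, emtensorConstant_mul_le (hT.of_apply_self hB hN) hB hXN⟩

end EnergyMomentum

section Minkowski

/-- The Minkowski inner product `eta` as a bilinear form. -/
def minkowskiForm : BilinForm ℝ (Fin 4 → ℝ) :=
  LinearMap.mk₂ ℝ eta
    (fun _ _ _ => by simp only [eta, Pi.add_apply]; ring)
    (fun _ _ _ => by simp only [eta, Pi.smul_apply, smul_eq_mul]; ring)
    (fun _ _ _ => by simp only [eta, Pi.add_apply]; ring)
    (fun _ _ _ => by simp only [eta, Pi.smul_apply, smul_eq_mul]; ring)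

theorem minkowskiForm_apply (X Y : Fin 4 → ℝ) : minkowskiForm X Y = eta X Y := rfl

theorem minkowskiForm_isSymm : minkowskiForm.IsSymm where
  eq X Y := by simp only [minkowskiForm_apply, eta, mul_comm]

theorem minkowskiForm_apply_single_zero (X : Fin 4 → ℝ) :
    minkowskiForm X (Pi.single 0 1) = -X 0 := by
  simp [minkowskiForm_apply, eta]

theorem isObserver_minkowskiForm_single_zero : IsObserver minkowskiForm (Pi.single 0 1) where
  apply_self := by simp [minkowskiForm_apply_single_zero]
  nonneg_of_orthogonal X hX := by
    have hX0 : X 0 = 0 := by simpa [minkowskiForm_apply_single_zero] using hX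
    rw [minkowskiForm_apply, eta, hX0, mul_zero, neg_zero, zero_add]
    exact add_nonneg (add_nonneg (mul_self_nonneg _) (mul_self_nonneg _)) (mul_self_nonneg _)

end Minkowski

/-- Quantitative positivity of the energy–momentum tensor (estimates (QZXN)/(alphanotation)). -/
theorem emtensor_positivity_quantitative (X N : Fin 4 → ℝ)
    (hNunit : eta N N = -1) (hN0 : 0 < N 0)
    (hX : eta X X < 0) (hX0 : 0 < X 0) :
    0 < (-eta X X) / (Real.sqrt (eta X X + (eta X N) ^ 2) - eta X N) ∧
      ∀ Z : Fin 4 → ℝ,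
        2 * eta Z X * eta Z N - eta X N * eta Z Z ≥
          (-eta X X) / (Real.sqrt (eta X X + (eta X N) ^ 2) - eta X N) *
            (eta Z Z + 2 * (eta Z N) ^ 2) :=
  emtensor_positivity_quantitative_general minkowskiForm_isSymm isObserver_minkowskiForm_single_zero
    hNunit (by simpa [minkowskiForm_apply_single_zero] using hN0)
    hX (by simpa [minkowskiForm_apply_single_zero] using hX0)
end
end

section
/- Commutator of smoothing and multiplication against a derivative (estimate (eq:smoothingmultiplicationcommute) of Lemma `lem:mutiplicationsmoothingcommute`, case k = 0): let B > 0 and let f : ℝ² → ℝ be a C¹ function with sup_z ( |f(z)| + ‖∇f(z)‖ ) ≤ B. Then there exists a constant C > 0, depending only on φ and B, such that for every ε ∈ (0,1], every compactly supported C¹ function g : ℝ² → ℝ, and each d ∈ {1,2}, ‖ S_ε( f·∂_d g ) − f·S_ε( ∂_d g ) ‖_{L²(ℝ²)} ≤ C · ‖g‖_{L²(ℝ²)}. -/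
noncomputable section

open MeasureTheory
open scoped NNReal ENNReal

/-- The plane `ℝ²`. -/
abbrev E2 : Type := EuclideanSpace ℝ (Fin 2)

/-- The tangential smoothing operator `S_ε f = φ_ε ⋆ f`, where `φ_ε(z) = ε⁻²φ(z/ε)`. -/
def smoothOp (φ : E2 → ℝ) (ε : ℝ) (f : E2 → ℝ) (z : E2) : ℝ :=
  ∫ w : E2, (ε ^ 2)⁻¹ * φ (ε⁻¹ • w) * f (z - w)

/-!
Integrating by parts in `(ψ ⋆ (f ∂ₑg) - f (ψ ⋆ ∂ₑg))(z) = ∫ ψ(w) (f(z - w) - f(z)) ∂ₑg(z - w) dw`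
moves the derivative onto `w ↦ ψ(w) (f(z - w) - f(z))`. As `f` has a bounded gradient, the
resulting kernel is dominated by a multiple of `|w| ‖∇ψ(w)‖ + |ψ(w)|`, so Young's inequality
`L¹ ⋆ Lᵖ ⊆ Lᵖ` applies. The factor `ε⁻¹` lost by differentiating `φ_ε` is compensated by the factor
`|w|`: the integral of the dominating function is the same for all dilations `φ_ε` of `φ`.
-/

section Young

lemma rpow_lintegral_le_measure_univ_rpow_mul {α : Type*} [MeasurableSpace α] {ν : Measure α}
    {h : α → ℝ≥0∞} (hh : AEMeasurable h ν) {p : ℝ} (hp : 1 ≤ p) :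
    (∫⁻ a, h a ∂ν) ^ p ≤ ν Set.univ ^ (p - 1) * ∫⁻ a, h a ^ p ∂ν := by
  have hp0 : 0 < p := one_pos.trans_le hp
  have holder := eLpNorm'_le_eLpNorm'_mul_rpow_measure_univ one_pos hp hh.aestronglyMeasurable
  calc (∫⁻ a, h a ∂ν) ^ p
      ≤ ((∫⁻ a, h a ^ p ∂ν) ^ (1 / p) * ν Set.univ ^ (1 / 1 - 1 / p)) ^ p := by
        gcongr
        simpa [eLpNorm'] using holder
    _ = ν Set.univ ^ (p - 1) * ∫⁻ a, h a ^ p ∂ν := by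
        rw [ENNReal.mul_rpow_of_nonneg _ _ hp0.le, ← ENNReal.rpow_mul, ← ENNReal.rpow_mul,
          one_div_mul_cancel hp0.ne', ENNReal.rpow_one, mul_comm]
        congr 2
        field_simp

variable {G : Type*} [AddGroup G] [MeasurableSpace G] [MeasurableAdd G] [MeasurableSub₂ G]
  {μ ν : Measure G} [μ.IsAddRightInvariant] [SFinite μ] [SFinite ν] {h : G → ℝ≥0∞}

lemma lintegral_rpow_lintegral_sub_le (hh : Measurable h) {p : ℝ} (hp : 1 ≤ p) :
    ∫⁻ z, (∫⁻ w, h (z - w) ∂ν) ^ p ∂μ ≤ ν Set.univ ^ p * ∫⁻ z, h z ^ p ∂μ := by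
  have hsub : Measurable fun q : G × G => h (q.1 - q.2) ^ p :=
    (hh.comp measurable_sub).pow_const p
  calc ∫⁻ z, (∫⁻ w, h (z - w) ∂ν) ^ p ∂μ
      ≤ ∫⁻ z, ν Set.univ ^ (p - 1) * ∫⁻ w, h (z - w) ^ p ∂ν ∂μ :=
        lintegral_mono fun z => rpow_lintegral_le_measure_univ_rpow_mul
          (hh.comp (measurable_const.sub measurable_id)).aemeasurable hp
    _ = ν Set.univ ^ (p - 1) * ∫⁻ w, ∫⁻ z, h (z - w) ^ p ∂μ ∂ν := by
        rw [lintegral_const_mul _ hsub.lintegral_prod_right', lintegral_lintegral_swap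
          (f := fun z w => h (z - w) ^ p) hsub.aemeasurable]
    _ = ν Set.univ ^ (p - 1) * (ν Set.univ * ∫⁻ z, h z ^ p ∂μ) := by
        simp only [lintegral_sub_right_eq_self (fun z => h z ^ p), lintegral_const,
          mul_comm (ν Set.univ)]
    _ = ν Set.univ ^ p * ∫⁻ z, h z ^ p ∂μ := by
        nth_rw 2 [← ENNReal.rpow_one (ν Set.univ)]
        rw [← mul_assoc, ← ENNReal.rpow_add_of_nonneg _ _ (sub_nonneg.2 hp) zero_le_one,
          sub_add_cancel]

lemma eLpNormEssSup_lintegral_sub_le (hh : Measurable h) :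
    eLpNormEssSup (fun z => ∫⁻ w, h (z - w) ∂ν) μ ≤ ν Set.univ * eLpNormEssSup h μ := by
  have h_translate (w : G) : ∀ᵐ z ∂μ, h (z - w) ≤ eLpNormEssSup h μ :=
    (measurePreserving_sub_right μ w).quasiMeasurePreserving.ae
      (enorm_ae_le_eLpNormEssSup h μ)
  have h_ae : ∀ᵐ z ∂μ, ∀ᵐ w ∂ν, h (z - w) ≤ eLpNormEssSup h μ :=
    (Measure.ae_ae_comm (p := fun z w => h (z - w) ≤ eLpNormEssSup h μ)
      (measurableSet_le (hh.comp measurable_sub) measurable_const)).2 (.of_forall h_translate)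
  refine essSup_le_of_ae_le _ ?_
  filter_upwards [h_ae] with z hz
  calc ∫⁻ w, h (z - w) ∂ν ≤ ∫⁻ _, eLpNormEssSup h μ ∂ν := lintegral_mono_ae hz
    _ = ν Set.univ * eLpNormEssSup h μ := by rw [lintegral_const, mul_comm]

lemma eLpNorm_lintegral_sub_le (hh : Measurable h) {p : ℝ≥0∞} (hp : 1 ≤ p) :
    eLpNorm (fun z => ∫⁻ w, h (z - w) ∂ν) p μ ≤ ν Set.univ * eLpNorm h p μ := by
  rcases eq_or_ne p ∞ with rfl | hp_top
  · simpa only [eLpNorm_exponent_top] using eLpNormEssSup_lintegral_sub_le hh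
  have hp0 : p ≠ 0 := (one_pos.trans_le hp).ne'
  have hp_real : 1 ≤ p.toReal := by simpa using ENNReal.toReal_mono hp_top hp
  have hp_pos : 0 < p.toReal := one_pos.trans_le hp_real
  simp only [eLpNorm_eq_lintegral_rpow_enorm_toReal hp0 hp_top, enorm_eq_self]
  calc (∫⁻ z, (∫⁻ w, h (z - w) ∂ν) ^ p.toReal ∂μ) ^ (1 / p.toReal)
      ≤ (ν Set.univ ^ p.toReal * ∫⁻ z, h z ^ p.toReal ∂μ) ^ (1 / p.toReal) := by
        gcongr
        exact lintegral_rpow_lintegral_sub_le hh hp_real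
    _ = ν Set.univ * (∫⁻ z, h z ^ p.toReal ∂μ) ^ (1 / p.toReal) := by
        rw [ENNReal.mul_rpow_of_nonneg _ _ (by positivity), ← ENNReal.rpow_mul,
          mul_one_div_cancel hp_pos.ne', ENNReal.rpow_one]

variable {F : Type*} [NormedAddCommGroup F] [NormedSpace ℝ F]

lemma eLpNorm_integral_smul_sub_le {K : G → G → ℝ} {k : G → ℝ} (hk : Integrable k μ)
    (hKk : ∀ z w, ‖K z w‖ ≤ k w) {g : G → F} (hg : StronglyMeasurable g) {p : ℝ≥0∞}
    (hp : 1 ≤ p) :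
    eLpNorm (fun z => ∫ w, K z w • g (z - w) ∂μ) p μ ≤
      ENNReal.ofReal (∫ w, k w ∂μ) * eLpNorm g p μ := by
  let ν := μ.withDensity fun w => ENNReal.ofReal (k w)
  have hν : ν Set.univ = ENNReal.ofReal (∫ w, k w ∂μ) := by
    rw [withDensity_apply _ .univ, setLIntegral_univ,
      ofReal_integral_eq_lintegral_ofReal hk (.of_forall fun w => (norm_nonneg _).trans (hKk w w))]
  have h_pointwise (z : G) : ‖∫ w, K z w • g (z - w) ∂μ‖ₑ ≤ ∫⁻ w, ‖g (z - w)‖ₑ ∂ν := by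
    have hgz : Measurable fun w => ‖g (z - w)‖ₑ :=
      hg.enorm.comp (measurable_const.sub measurable_id)
    rw [lintegral_withDensity_eq_lintegral_mul₀ hk.aemeasurable.ennreal_ofReal hgz.aemeasurable]
    refine (enorm_integral_le_lintegral_enorm _).trans (lintegral_mono fun w => ?_)
    rw [enorm_smul, ← ofReal_norm (K z w), Pi.mul_apply]
    gcongr
    exact hKk z w
  calc eLpNorm (fun z => ∫ w, K z w • g (z - w) ∂μ) p μ
      ≤ eLpNorm (fun z => ∫⁻ w, ‖g (z - w)‖ₑ ∂ν) p μ := eLpNorm_mono_enorm h_pointwise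
    _ ≤ ν Set.univ * eLpNorm (‖g ·‖ₑ) p μ := eLpNorm_lintegral_sub_le hg.enorm hp
    _ = ENNReal.ofReal (∫ w, k w ∂μ) * eLpNorm g p μ := by rw [hν, eLpNorm_enorm]

end Young

section ConvCommutator

open ContinuousLinearMap
open scoped Convolution

variable {G F : Type*} [AddGroup G] [NormedAddCommGroup F] [NormedSpace ℝ F]

/-- The commutator `ψ ⋆ (f h) - f (ψ ⋆ h)` of convolution with `ψ` and multiplication by `f`,
applied to `h`. -/
def convCommutator [MeasurableSpace G] (μ : Measure G) (ψ f : G → ℝ) (h : G → F) (z : G) : F :=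
  (ψ ⋆[lsmul ℝ ℝ, μ] fun y => f y • h y) z - f z • (ψ ⋆[lsmul ℝ ℝ, μ] h) z

/-- The function `w ↦ ψ(w) (f(z - w) - f(z))`; its integral against `h(z - w)` is the commutator of
convolution with `ψ` and multiplication by `f`, applied to `h` at `z`. -/
def weightedIncrement (ψ f : G → ℝ) (z w : G) : ℝ :=
  ψ w * (f (z - w) - f z)

variable [TopologicalSpace G]

lemma hasCompactSupport_weightedIncrement {ψ : G → ℝ} (hψ : HasCompactSupport ψ) (f : G → ℝ)
    (z : G) : HasCompactSupport (weightedIncrement ψ f z) :=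
  hψ.mul_right

variable [ContinuousSub G] [MeasurableSpace G] [OpensMeasurableSpace G] {μ : Measure G}
  [IsFiniteMeasureOnCompacts μ] {ψ f : G → ℝ} {h : G → F}

lemma integrable_smul_comp_const_sub (hψ : Continuous ψ) (hψc : HasCompactSupport ψ)
    (hh : Continuous h) (z : G) : Integrable (fun w => ψ w • h (z - w)) μ :=
  (hψ.smul (hh.comp (continuous_sub_left z))).integrable_of_hasCompactSupport hψc.smul_right

lemma convCommutator_eq_integral (hψ : Continuous ψ) (hψc : HasCompactSupport ψ)
    (hf : Continuous f) (hh : Continuous h) (z : G) :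
    convCommutator μ ψ f h z = ∫ w, weightedIncrement ψ f z w • h (z - w) ∂μ := by
  have h_fh : Integrable (fun w => ψ w • f (z - w) • h (z - w)) μ :=
    integrable_smul_comp_const_sub hψ hψc (hf.smul hh) z
  have h_h : Integrable (fun w => f z • ψ w • h (z - w)) μ :=
    (integrable_smul_comp_const_sub hψ hψc hh z).smul (f z)
  simp only [convCommutator, convolution_def, lsmul_apply]
  rw [← integral_smul, ← integral_sub h_fh h_h]
  congr with w
  rw [weightedIncrement]
  module

end ConvCommutator

section CommutatorWeight

open Module

variable {E F : Type*} [NormedAddCommGroup E] [NormedSpace ℝ E] [NormedAddCommGroup F]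
  [NormedSpace ℝ F] {φ ψ f : E → ℝ} {g : E → F} {ε L : ℝ}

/-- The density `|z| ‖∇ψ(z)‖ + |ψ(z)|`, whose integral bounds the operator `g ↦ [ψ ⋆ ·, f] ∂ₑg` on
`Lᵖ` for a unit vector `e` and a function `f` with `‖∇f‖ ≤ 1`. -/
def commutatorWeight (ψ : E → ℝ) (z : E) : ℝ :=
  ‖z‖ * ‖fderiv ℝ ψ z‖ + ‖ψ z‖

lemma commutatorWeight_nonneg (ψ : E → ℝ) (z : E) : 0 ≤ commutatorWeight ψ z := by
  unfold commutatorWeight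
  positivity

lemma integrable_commutatorWeight [MeasurableSpace E] [OpensMeasurableSpace E] {μ : Measure E}
    [IsFiniteMeasureOnCompacts μ] (hψ : ContDiff ℝ 1 ψ) (hψc : HasCompactSupport ψ) :
    Integrable (commutatorWeight ψ) μ :=
  ((continuous_norm.mul (hψ.continuous_fderiv one_ne_zero).norm).add
    hψ.continuous.norm).integrable_of_hasCompactSupport
    ((hψc.fderiv ℝ).norm.mul_left.add hψc.norm)

/-- The `L¹`-normalised dilation `φ_ε(z) = ε⁻ⁿ φ(z/ε)` of a kernel on a space of dimension `n`. -/
def rescale (φ : E → ℝ) (ε : ℝ) (z : E) : ℝ :=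
  (ε ^ finrank ℝ E)⁻¹ * φ (ε⁻¹ • z)

lemma contDiff_rescale (hφ : ContDiff ℝ 1 φ) (ε : ℝ) : ContDiff ℝ 1 (rescale φ ε) :=
  contDiff_const.mul (hφ.comp (contDiff_const_smul _))

lemma hasCompactSupport_rescale (hφ : HasCompactSupport φ) (hε : ε ≠ 0) :
    HasCompactSupport (rescale φ ε) :=
  (hφ.comp_smul (inv_ne_zero hε)).mul_left

lemma fderiv_rescale (φ : E → ℝ) (ε : ℝ) (z : E) :
    fderiv ℝ (rescale φ ε) z = (ε ^ finrank ℝ E)⁻¹ • ε⁻¹ • fderiv ℝ φ (ε⁻¹ • z) := by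
  have h_smul : rescale φ ε = (ε ^ finrank ℝ E)⁻¹ • fun z => φ (ε⁻¹ • z) := rfl
  rw [h_smul, fderiv_const_smul_field, Pi.smul_apply, fderiv_comp_smul]

lemma commutatorWeight_rescale (φ : E → ℝ) (hε : 0 ≤ ε) :
    commutatorWeight (rescale φ ε) = rescale (commutatorWeight φ) ε := by
  ext z
  simp only [commutatorWeight, rescale, fderiv_rescale, norm_smul, norm_mul, norm_inv, norm_pow,
    Real.norm_of_nonneg hε]
  ring

lemma integral_rescale [FiniteDimensional ℝ E] [MeasurableSpace E] [BorelSpace E] {μ : Measure E}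
    [μ.IsAddHaarMeasure] (φ : E → ℝ) (hε : 0 < ε) :
    ∫ z, rescale φ ε z ∂μ = ∫ z, φ z ∂μ := by
  simp only [rescale]
  rw [integral_const_mul, Measure.integral_comp_inv_smul_of_nonneg μ φ hε.le, smul_eq_mul,
    inv_mul_cancel_left₀ (pow_pos hε _).ne']

lemma hasFDerivAt_comp_const_sub {g' : E →L[ℝ] F} {z w : E} (hg : HasFDerivAt g g' (z - w)) :
    HasFDerivAt (fun w => g (z - w)) (-g') w := by
  simpa [Function.comp_def] using hg.comp w ((hasFDerivAt_id w).const_sub z)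

lemma contDiff_weightedIncrement (hψ : ContDiff ℝ 1 ψ) (hf : ContDiff ℝ 1 f) (z : E) :
    ContDiff ℝ 1 (weightedIncrement ψ f z) :=
  hψ.mul ((hf.comp (contDiff_const.sub contDiff_id)).sub contDiff_const)

lemma fderiv_weightedIncrement (hψ : Differentiable ℝ ψ) (hf : Differentiable ℝ f) (z w : E) :
    fderiv ℝ (weightedIncrement ψ f z) w =
      (f (z - w) - f z) • fderiv ℝ ψ w - ψ w • fderiv ℝ f (z - w) := by
  have h_increment := (hasFDerivAt_comp_const_sub (hf (z - w)).hasFDerivAt).sub_const (f z)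
  have h_product : HasFDerivAt (weightedIncrement ψ f z)
      (ψ w • -fderiv ℝ f (z - w) + (f (z - w) - f z) • fderiv ℝ ψ w) w :=
    (hψ w).hasFDerivAt.mul h_increment
  rw [h_product.fderiv]
  module

lemma norm_fderiv_weightedIncrement_le (hψ : Differentiable ℝ ψ) (hf : Differentiable ℝ f)
    (hfL : ∀ z, ‖fderiv ℝ f z‖ ≤ L) (z w : E) :
    ‖fderiv ℝ (weightedIncrement ψ f z) w‖ ≤ L * commutatorWeight ψ w := by
  have h_increment : ‖f (z - w) - f z‖ ≤ L * ‖w‖ := by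
    simpa using convex_univ.norm_image_sub_le_of_norm_fderiv_le (fun x _ => hf x)
      (fun x _ => hfL x) (Set.mem_univ z) (Set.mem_univ (z - w))
  calc ‖fderiv ℝ (weightedIncrement ψ f z) w‖
      ≤ ‖f (z - w) - f z‖ * ‖fderiv ℝ ψ w‖ + ‖ψ w‖ * ‖fderiv ℝ f (z - w)‖ := by
        rw [fderiv_weightedIncrement hψ hf, ← norm_smul, ← norm_smul]
        exact norm_sub_le _ _
    _ ≤ L * ‖w‖ * ‖fderiv ℝ ψ w‖ + ‖ψ w‖ * L := by
        gcongr
        exact hfL _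
    _ = L * commutatorWeight ψ w := by
        rw [commutatorWeight]
        ring

end CommutatorWeight

section CommutatorEstimate

variable {E F : Type*} [NormedAddCommGroup E] [NormedSpace ℝ E] [FiniteDimensional ℝ E]
  [MeasurableSpace E] [BorelSpace E] {μ : Measure E} [μ.IsAddHaarMeasure]
  [NormedAddCommGroup F] [NormedSpace ℝ F] {φ ψ f : E → ℝ} {g : E → F} {ε L : ℝ} {p : ℝ≥0∞}

lemma integral_smul_fderiv_comp_const_sub (hψ : ContDiff ℝ 1 ψ) (hψc : HasCompactSupport ψ)
    (hg : ContDiff ℝ 1 g) (e z : E) :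
    ∫ w, ψ w • fderiv ℝ g (z - w) e ∂μ = ∫ w, fderiv ℝ ψ w e • g (z - w) ∂μ := by
  have h_reflect (w : E) : HasFDerivAt (fun w => g (z - w)) (-fderiv ℝ g (z - w)) w :=
    hasFDerivAt_comp_const_sub (hg.differentiable one_ne_zero _).hasFDerivAt
  have h_ψ'g : Integrable (fun w => fderiv ℝ ψ w e • g (z - w)) μ :=
    integrable_smul_comp_const_sub
      ((hψ.continuous_fderiv one_ne_zero).clm_apply continuous_const) (hψc.fderiv_apply ℝ e)
      hg.continuous z
  have h_ψg' : Integrable (fun w => ψ w • fderiv ℝ g (z - w) e) μ :=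
    integrable_smul_comp_const_sub hψ.continuous hψc
      ((hg.continuous_fderiv one_ne_zero).clm_apply continuous_const) z
  have h_parts := integral_smul_fderiv_eq_neg_fderiv_smul_of_integrable h_ψ'g
    (by simpa [(h_reflect _).fderiv] using h_ψg')
    (integrable_smul_comp_const_sub hψ.continuous hψc hg.continuous z)
    (fun w _ => hψ.differentiable one_ne_zero w) (fun w _ => (h_reflect w).differentiableAt)
  simpa [(h_reflect _).fderiv, integral_neg] using h_parts

lemma convCommutator_fderiv_eq_integral (hψ : ContDiff ℝ 1 ψ) (hψc : HasCompactSupport ψ)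
    (hf : ContDiff ℝ 1 f) (hg : ContDiff ℝ 1 g) (e z : E) :
    convCommutator μ ψ f (fderiv ℝ g · e) z =
      ∫ w, fderiv ℝ (weightedIncrement ψ f z) w e • g (z - w) ∂μ := by
  rw [convCommutator_eq_integral hψ.continuous hψc hf.continuous
    ((hg.continuous_fderiv one_ne_zero).clm_apply continuous_const)]
  exact integral_smul_fderiv_comp_const_sub (contDiff_weightedIncrement hψ hf z)
    (hasCompactSupport_weightedIncrement hψc f z) hg e z

theorem eLpNorm_convCommutator_fderiv_le (hψ : ContDiff ℝ 1 ψ) (hψc : HasCompactSupport ψ)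
    (hf : ContDiff ℝ 1 f) (hfL : ∀ z, ‖fderiv ℝ f z‖ ≤ L) (hg : ContDiff ℝ 1 g) (e : E)
    (hp : 1 ≤ p) :
    eLpNorm (convCommutator μ ψ f (fderiv ℝ g · e)) p μ ≤
      ENNReal.ofReal (L * ‖e‖ * ∫ w, commutatorWeight ψ w ∂μ) * eLpNorm g p μ := by
  have h_kernel (z w : E) :
      ‖fderiv ℝ (weightedIncrement ψ f z) w e‖ ≤ L * ‖e‖ * commutatorWeight ψ w := by
    rw [mul_right_comm]
    exact ContinuousLinearMap.le_of_opNorm_le _ (norm_fderiv_weightedIncrement_le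
      (hψ.differentiable one_ne_zero) (hf.differentiable one_ne_zero) hfL z w) e
  rw [funext (convCommutator_fderiv_eq_integral hψ hψc hf hg e), ← integral_const_mul]
  exact eLpNorm_integral_smul_sub_le ((integrable_commutatorWeight hψ hψc).const_mul _) h_kernel
    hg.continuous.stronglyMeasurable hp

theorem smoothing_multiplication_commutator_general (hφ : ContDiff ℝ 1 φ)
    (hφc : HasCompactSupport φ) (hf : ContDiff ℝ 1 f) (hfL : ∀ z, ‖fderiv ℝ f z‖ ≤ L)
    (hε : 0 < ε) (hg : ContDiff ℝ 1 g) (e : E) (hp : 1 ≤ p) :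
    eLpNorm (convCommutator μ (rescale φ ε) f (fderiv ℝ g · e)) p μ ≤
      ENNReal.ofReal (L * ‖e‖ * ∫ w, commutatorWeight φ w ∂μ) * eLpNorm g p μ := by
  rw [← integral_rescale (commutatorWeight φ) hε, ← commutatorWeight_rescale φ hε.le]
  exact eLpNorm_convCommutator_fderiv_le (contDiff_rescale hφ ε)
    (hasCompactSupport_rescale hφc hε.ne') hf hfL hg e hp

end CommutatorEstimate

lemma hasCompactSupport_of_forall_abs_le {ι β : Type*} [Zero β] {φ : EuclideanSpace ℝ ι → β}
    {r : ℝ} (hφ : ∀ z, φ z ≠ 0 → ∀ i, |z i| ≤ r) : HasCompactSupport φ := by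
  let cube : Set (ι → ℝ) := Set.univ.pi fun _ => Set.Icc (-r) r
  have h_cube : IsCompact (WithLp.toLp 2 '' cube) :=
    (isCompact_univ_pi fun _ => isCompact_Icc).image (PiLp.continuous_toLp 2 _)
  exact .of_support_subset_isCompact h_cube fun z hz =>
    ⟨WithLp.ofLp z, fun i _ => abs_le.1 (hφ z hz i), rfl⟩

lemma smoothOp_mul_sub_mul_smoothOp (φ : E2 → ℝ) (ε : ℝ) (f h : E2 → ℝ) :
    (fun z => smoothOp φ ε (fun y => f y * h y) z - f z * smoothOp φ ε h z) =
      convCommutator volume (rescale φ ε) f h := by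
  ext z
  simp only [smoothOp, convCommutator, rescale, finrank_euclideanSpace_fin, convolution_def,
    ContinuousLinearMap.lsmul_apply, smul_eq_mul]

/-- Commutator of smoothing and multiplication against a derivative
(estimate (eq:smoothingmultiplicationcommute) of Lemma
`lem:mutiplicationsmoothingcommute`, case k = 0). -/
theorem smoothing_multiplication_commutator (φ : E2 → ℝ)
    (hφ : ContDiff ℝ 1 φ)
    (hφsupp : ∀ z : E2, φ z ≠ 0 → ∀ i, |z i| ≤ 1)
    (hφint : (∫ z : E2, φ z) = 1) :
    ∀ B > (0 : ℝ), ∃ C > (0 : ℝ), ∀ f : E2 → ℝ,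
      ContDiff ℝ 1 f → (∀ z, |f z| + ‖fderiv ℝ f z‖ ≤ B) →
      ∀ ε ∈ Set.Ioc (0 : ℝ) 1, ∀ g : E2 → ℝ,
        ContDiff ℝ 1 g → HasCompactSupport g → ∀ d : Fin 2,
        eLpNorm (fun z =>
            smoothOp φ ε (fun y => f y * fderiv ℝ g y (EuclideanSpace.single d 1)) z -
              f z * smoothOp φ ε (fun y => fderiv ℝ g y (EuclideanSpace.single d 1)) z)
            2 volume ≤
          ENNReal.ofReal C * eLpNorm g 2 volume := by
  intro B hB
  have h_weight : 0 ≤ ∫ w, commutatorWeight φ w := integral_nonneg (commutatorWeight_nonneg φ)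
  refine ⟨B * (∫ w, commutatorWeight φ w) + 1, by positivity, fun f hf hfB ε hε g hg _ d => ?_⟩
  have hfL (z : E2) : ‖fderiv ℝ f z‖ ≤ B := (le_add_of_nonneg_left (abs_nonneg _)).trans (hfB z)
  rw [smoothOp_mul_sub_mul_smoothOp]
  refine (smoothing_multiplication_commutator_general hφ
    (hasCompactSupport_of_forall_abs_le hφsupp) hf hfL hε.1 hg _ one_le_two).trans ?_
  gcongr
  simp
end
end
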